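/- Let u be a classical solution of the graphical mean curvature flow with transport term f⃗ (of class C¹) and Neumann boundary condition, and let v := √(1+|du|²). Then on Ω×(0,T): ∂_t v − Δ_{Γ_t} v − ((du/v)·dv)(∂_t u/v) = −|A_t|² v − 2|D_{Γ_t} v|²/v + du·d(f⃗·n⃗), where d(f⃗·n⃗) denotes the gradient in x of the function x ↦ f⃗(x,u(x,t),t)·n⃗(x,t). -/

import Mathlib

open MeasureTheory Metric Set Real Filter
open scoped RealInnerProductSpace ENNReal NNReal Topology ContDiff

noncomputable section

abbrev Eucl (n : ℕ) := EuclideanSpace ℝ (Fin n)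

variable {n : ℕ}

/-- spatial gradient of a time-dependent function -/
def sgrad (u : Eucl n → ℝ → ℝ) (x : Eucl n) (t : ℝ) : Eucl n :=
  gradient (fun y => u y t) x

/-- the area element `v = √(1+|du|²)` -/
def vel (u : Eucl n → ℝ → ℝ) (x : Eucl n) (t : ℝ) : ℝ :=
  Real.sqrt (1 + ‖sgrad u x t‖ ^ 2)

/-- divergence of a vector field on `ℝⁿ` -/
def divg (F : Eucl n → Eucl n) (x : Eucl n) : ℝ :=
  ∑ i, fderiv ℝ (fun y => F y i) x (EuclideanSpace.single i 1)

/-- the upward unit normal `(−du,1)/v` of the graph, as a vector in `ℝ^{n+1}` -/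
def unormal (u : Eucl n → ℝ → ℝ) (x : Eucl n) (t : ℝ) : Eucl (n + 1) :=
  (WithLp.equiv 2 (Fin (n + 1) → ℝ)).symm
    (Fin.snoc (fun i => -(sgrad u x t i) / vel u x t) (1 / vel u x t))

/-- the point `(x, u(x,t))` on the graph `Γ_t ⊆ ℝ^{n+1}` -/
def gpt (u : Eucl n → ℝ → ℝ) (x : Eucl n) (t : ℝ) : Eucl (n + 1) :=
  (WithLp.equiv 2 (Fin (n + 1) → ℝ)).symm (Fin.snoc (fun i => x i) (u x t))

/-- `f⃗ · n⃗` evaluated at `(x, u(x,t), t)` -/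
def fdotn (f : Eucl n → ℝ → ℝ → Eucl (n + 1)) (u : Eucl n → ℝ → ℝ)
    (x : Eucl n) (t : ℝ) : ℝ :=
  ⟪f x (u x t) t, unormal u x t⟫

/-- signed distance to `∂Ω` (negative inside `Ω`) -/
def sdist (Ω : Set (Eucl n)) (y : Eucl n) : ℝ := infDist y Ω - infDist y Ωᶜ

/-- the outward unit normal of `∂Ω`, as the gradient of the signed distance -/
def outNormal (Ω : Set (Eucl n)) (x : Eucl n) : Eucl n := gradient (sdist Ω) x

/-- `∂Ω` is smooth: the signed distance is smooth near the boundary. -/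
def SmoothBoundary (Ω : Set (Eucl n)) : Prop :=
  ∃ U : Set (Eucl n), IsOpen U ∧ frontier Ω ⊆ U ∧ ContDiffOn ℝ ∞ (sdist Ω) U

/-- classical solution of graphical MCF with transport term and Neumann condition -/
structure IsMCFSolution (Ω : Set (Eucl n)) (f : Eucl n → ℝ → ℝ → Eucl (n + 1))
    (u₀ : Eucl n → ℝ) (u : Eucl n → ℝ → ℝ) (T : ℝ) : Prop where
  reg_x : ∀ t ∈ Ioo (0 : ℝ) T, ContDiffOn ℝ 2 (fun x => u x t) Ω
  reg_t : ∀ x ∈ Ω, ∀ t ∈ Ioo (0 : ℝ) T, DifferentiableAt ℝ (u x) t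
  cont : ContinuousOn (fun p : Eucl n × ℝ => u p.1 p.2) (closure Ω ×ˢ Icc 0 T)
  grad_cont : ∀ t ∈ Ioo (0 : ℝ) T, ContinuousOn (fun x => sgrad u x t) (closure Ω)
  pde : ∀ x ∈ Ω, ∀ t ∈ Ioo (0 : ℝ) T,
    deriv (u x) t / vel u x t
      = divg (fun y => (vel u y t)⁻¹ • sgrad u y t) x + fdotn f u x t
  neumann : ∀ t ∈ Ioo (0 : ℝ) T, ∀ x ∈ frontier Ω, ⟪sgrad u x t, outNormal Ω x⟫ = 0
  init : ∀ x ∈ closure Ω, u x 0 = u₀ x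

/-- mixed norm `‖f⃗‖_{L^q_t L^p_x (a,b,Γ_t)}`, with the graph integral
`∫_{Γ_t} g dH^n = ∫_Ω g(x,u(x,t)) v dx`, as an extended real number -/
def mixedNormE (Ω : Set (Eucl n)) (f : Eucl n → ℝ → ℝ → Eucl (n + 1))
    (u : Eucl n → ℝ → ℝ) (p q a b : ℝ) : ℝ≥0∞ :=
  (∫⁻ t in Ioo a b,
      (∫⁻ x in Ω, (‖f x (u x t) t‖₊ : ℝ≥0∞) ^ p * ENNReal.ofReal (vel u x t)) ^ (q / p))
    ^ (1 / q)


/-- partial derivative in the `i`-th coordinate direction -/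
def pd {m : ℕ} (g : Eucl m → ℝ) (i : Fin m) (x : Eucl m) : ℝ :=
  fderiv ℝ g x (EuclideanSpace.single i 1)

/-- second partial derivative -/
def pd2 {m : ℕ} (g : Eucl m → ℝ) (i j : Fin m) (x : Eucl m) : ℝ :=
  pd (pd g j) i x

/-- inverse metric of the graph: `g^{ij} = δ_{ij} − ∂_iu ∂_ju / v²` -/
def gInv (u : Eucl n → ℝ → ℝ) (x : Eucl n) (t : ℝ) (i j : Fin n) : ℝ :=
  (if i = j then 1 else 0)
    - pd (fun y => u y t) i x * pd (fun y => u y t) j x / (vel u x t) ^ 2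

/-- the mean curvature scalar `h = −div(du/v)` -/
def meanH (u : Eucl n → ℝ → ℝ) (x : Eucl n) (t : ℝ) : ℝ :=
  -divg (fun y => (vel u y t)⁻¹ • sgrad u y t) x

/-- `|A_t|²`, the squared norm of the second fundamental form of the graph -/
def secondFF2 (u : Eucl n → ℝ → ℝ) (x : Eucl n) (t : ℝ) : ℝ :=
  ∑ i, ∑ j, ∑ k, ∑ l,
    gInv u x t i k * gInv u x t j l
      * (pd2 (fun y => u y t) i j x / vel u x t)
      * (pd2 (fun y => u y t) k l x / vel u x t)

/-- Laplace–Beltrami operator of the graph: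
`Δ_{Γ_t}φ = Σ g^{ij} ∂²_{ij}φ + h (du·dφ)/v` -/
def lapB (u : Eucl n → ℝ → ℝ) (φ : Eucl n → ℝ) (x : Eucl n) (t : ℝ) : ℝ :=
  (∑ i, ∑ j, gInv u x t i j * pd2 φ i j x)
    + meanH u x t * ⟪sgrad u x t, gradient φ x⟫ / vel u x t

/-- `|D_{Γ_t}φ|² = |dφ|² − (du·dφ)²/v²` -/
def tgradSq (u : Eucl n → ℝ → ℝ) (φ : Eucl n → ℝ) (x : Eucl n) (t : ℝ) : ℝ :=
  ‖gradient φ x‖ ^ 2 - ⟪sgrad u x t, gradient φ x⟫ ^ 2 / (vel u x t) ^ 2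

/-
Write `v² = 1 + |du|²`, so that `v dv = D²u du`. Bochner's formula for `|du|²` expresses `v Δv` by
`du · dΔu`, `|D²u|²` and `|dv|²`, while the mean curvature satisfies `v (v h + Δu) = du · dv`.
Differentiating the latter in the direction `du` produces the term `D²v(du, du)` that separates `Δv`
from the Laplace-Beltrami operator and trades `dΔu` for `dh`, whence
`Δ_Γ v = |A|² v + 2 |D_Γ v|² / v - du · dh`. On the other hand `∂ₜu = N v` with `N` the normal
speed gives `∂ₜv = du · d(∂ₜu) / v = N (du · dv) / v + du · dN`, and the flow equation says
`N + h = f · n`.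
-/

section Calculus

lemma contDiffAt_pd {φ : Eucl n → ℝ} {x : Eucl n} {k m : ℕ∞ω} (h : ContDiffAt ℝ m φ x)
    (hkm : k + 1 ≤ m) (i : Fin n) : ContDiffAt ℝ k (pd φ i) x :=
  (h.fderiv_right hkm).clm_apply contDiffAt_const

lemma pd_congr {φ ψ : Eucl n → ℝ} {x : Eucl n} (h : φ =ᶠ[𝓝 x] ψ) (i : Fin n) :
    pd φ i x = pd ψ i x := by
  rw [pd, pd, h.fderiv_eq]

lemma pd_add {φ ψ : Eucl n → ℝ} {x : Eucl n} (hφ : DifferentiableAt ℝ φ x)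
    (hψ : DifferentiableAt ℝ ψ x) (i : Fin n) :
    pd (fun y => φ y + ψ y) i x = pd φ i x + pd ψ i x := by
  simp only [pd, fderiv_fun_add hφ hψ, add_apply]

lemma pd_const_add (c : ℝ) (φ : Eucl n → ℝ) (i : Fin n) :
    pd (fun y => c + φ y) i = pd φ i := by
  funext x
  rw [pd, fderiv_const_add, pd]

lemma pd_mul {φ ψ : Eucl n → ℝ} {x : Eucl n} (hφ : DifferentiableAt ℝ φ x)
    (hψ : DifferentiableAt ℝ ψ x) (i : Fin n) :
    pd (fun y => φ y * ψ y) i x = φ x * pd ψ i x + ψ x * pd φ i x := by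
  simp only [pd, fderiv_fun_mul hφ hψ, add_apply, smul_apply, smul_eq_mul]

lemma pd_sum {ι : Type*} {s : Finset ι} {φ : ι → Eucl n → ℝ} {x : Eucl n}
    (hφ : ∀ k ∈ s, DifferentiableAt ℝ (φ k) x) (i : Fin n) :
    pd (fun y => ∑ k ∈ s, φ k y) i x = ∑ k ∈ s, pd (φ k) i x := by
  simp only [pd, fderiv_fun_sum hφ, sum_apply]

lemma fderiv_fderiv_apply_comm {E G : Type*} [NormedAddCommGroup E] [NormedSpace ℝ E]
    [NormedAddCommGroup G] [NormedSpace ℝ G] {φ : E → G} {x : E}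
    (h : ContDiffAt ℝ 2 φ x) (a b : E) :
    fderiv ℝ (fun y => fderiv ℝ φ y a) x b = fderiv ℝ (fun y => fderiv ℝ φ y b) x a := by
  have hd : DifferentiableAt ℝ (fderiv ℝ φ) x :=
    (h.fderiv_right (m := 1) le_rfl).differentiableAt one_ne_zero
  have hsymm : IsSymmSndFDerivAt ℝ φ x :=
    h.isSymmSndFDerivAt (minSmoothness_of_isRCLikeNormedField).le
  simpa [fderiv_clm_apply hd (differentiableAt_const _)] using hsymm b a

lemma pd2_comm {φ : Eucl n → ℝ} {x : Eucl n} (h : ContDiffAt ℝ 2 φ x) (i j : Fin n) :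
    pd2 φ i j x = pd2 φ j i x :=
  fderiv_fderiv_apply_comm h _ _

end Calculus

section GradientHessian

open Matrix

/-- The gradient as a plain coordinate vector, on which matrices act by `*ᵥ`. -/
def coordGrad (φ : Eucl n → ℝ) (x : Eucl n) : Fin n → ℝ := fun i => pd φ i x

/-- The Hessian matrix; its trace plays the role of the Laplacian. -/
def hess (φ : Eucl n → ℝ) (x : Eucl n) : Matrix (Fin n) (Fin n) ℝ :=
  Matrix.of fun i j => pd2 φ i j x

lemma gradient_eq_coordGrad (φ : Eucl n → ℝ) (x : Eucl n) :
    (gradient φ x).ofLp = coordGrad φ x := by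
  funext i
  have h : ⟪gradient φ x, EuclideanSpace.single i (1 : ℝ)⟫ = pd φ i x := by
    rw [gradient, InnerProductSpace.toDual_symm_apply, pd]
  rwa [EuclideanSpace.inner_single_right, one_mul, conj_trivial] at h

lemma inner_gradient_gradient (φ ψ : Eucl n → ℝ) (x : Eucl n) :
    ⟪gradient φ x, gradient ψ x⟫ = coordGrad φ x ⬝ᵥ coordGrad ψ x := by
  rw [EuclideanSpace.inner_eq_star_dotProduct, gradient_eq_coordGrad, gradient_eq_coordGrad,
    star_trivial, dotProduct_comm]

lemma norm_gradient_sq (φ : Eucl n → ℝ) (x : Eucl n) :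
    ‖gradient φ x‖ ^ 2 = coordGrad φ x ⬝ᵥ coordGrad φ x := by
  rw [← real_inner_self_eq_norm_sq, inner_gradient_gradient]

lemma coordGrad_congr {φ ψ : Eucl n → ℝ} {x : Eucl n} (h : φ =ᶠ[𝓝 x] ψ) :
    coordGrad φ x = coordGrad ψ x :=
  funext (pd_congr h)

lemma coordGrad_add {φ ψ : Eucl n → ℝ} {x : Eucl n} (hφ : DifferentiableAt ℝ φ x)
    (hψ : DifferentiableAt ℝ ψ x) :
    coordGrad (fun y => φ y + ψ y) x = coordGrad φ x + coordGrad ψ x :=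
  funext (pd_add hφ hψ)

lemma coordGrad_mul {φ ψ : Eucl n → ℝ} {x : Eucl n} (hφ : DifferentiableAt ℝ φ x)
    (hψ : DifferentiableAt ℝ ψ x) :
    coordGrad (fun y => φ y * ψ y) x = φ x • coordGrad ψ x + ψ x • coordGrad φ x :=
  funext (pd_mul hφ hψ)

lemma coordGrad_const_add (c : ℝ) (φ : Eucl n → ℝ) :
    coordGrad (fun y => c + φ y) = coordGrad φ := by
  funext x i
  rw [coordGrad, pd_const_add, coordGrad]

lemma coordGrad_inv {φ : Eucl n → ℝ} {x : Eucl n} (hφ : DifferentiableAt ℝ φ x)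
    (hne : φ x ≠ 0) :
    coordGrad (fun y => (φ y)⁻¹) x = -(φ x ^ 2)⁻¹ • coordGrad φ x := by
  have hinv := ((hasDerivAt_inv hne).comp_hasFDerivAt x hφ.hasFDerivAt).fderiv
  exact funext fun i => congrArg (· (EuclideanSpace.single i 1)) hinv

lemma hess_const_add (c : ℝ) (φ : Eucl n → ℝ) : hess (fun y => c + φ y) = hess φ := by
  funext x
  simp only [hess, pd2, pd_const_add]

lemma hess_isSymm {φ : Eucl n → ℝ} {x : Eucl n} (h : ContDiffAt ℝ 2 φ x) :
    (hess φ x).IsSymm :=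
  Matrix.IsSymm.ext fun i j => pd2_comm h j i

lemma contDiffAt_coordGrad_dotProduct {φ ψ : Eucl n → ℝ} {x : Eucl n} {k m : ℕ∞ω}
    (hφ : ContDiffAt ℝ m φ x) (hψ : ContDiffAt ℝ m ψ x) (hkm : k + 1 ≤ m) :
    ContDiffAt ℝ k (fun y => coordGrad φ y ⬝ᵥ coordGrad ψ y) x :=
  ContDiffAt.sum fun i _ => (contDiffAt_pd hφ hkm i).mul (contDiffAt_pd hψ hkm i)

lemma contDiffAt_trace_hess {φ : Eucl n → ℝ} {x : Eucl n} {k m : ℕ∞ω}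
    (h : ContDiffAt ℝ m φ x) (hkm : k + 1 + 1 ≤ m) :
    ContDiffAt ℝ k (fun y => (hess φ y).trace) x :=
  ContDiffAt.sum fun i _ => contDiffAt_pd (contDiffAt_pd h hkm i) le_rfl i

lemma differentiableAt_pd {φ : Eucl n → ℝ} {x : Eucl n} (h : ContDiffAt ℝ 2 φ x) (i : Fin n) :
    DifferentiableAt ℝ (pd φ i) x :=
  (contDiffAt_pd (k := 1) h le_rfl i).differentiableAt one_ne_zero

lemma coordGrad_dotProduct {φ ψ : Eucl n → ℝ} {x : Eucl n} (hφ : ContDiffAt ℝ 2 φ x)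
    (hψ : ContDiffAt ℝ 2 ψ x) :
    coordGrad (fun y => coordGrad φ y ⬝ᵥ coordGrad ψ y) x
      = hess φ x *ᵥ coordGrad ψ x + hess ψ x *ᵥ coordGrad φ x := by
  have hφ' := differentiableAt_pd hφ
  have hψ' := differentiableAt_pd hψ
  funext i
  calc pd (fun y => ∑ k, pd φ k y * pd ψ k y) i x
      = ∑ k, (pd φ k x * pd2 ψ i k x + pd ψ k x * pd2 φ i k x) := by
        rw [pd_sum fun k _ => (hφ' k).fun_mul (hψ' k)]
        exact Finset.sum_congr rfl fun k _ => pd_mul (hφ' k) (hψ' k) i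
    _ = (hess φ x *ᵥ coordGrad ψ x + hess ψ x *ᵥ coordGrad φ x) i := by
        simp only [Finset.sum_add_distrib, Pi.add_apply, mulVec, dotProduct, hess, coordGrad,
          of_apply, mul_comm, add_comm]

lemma trace_hess_mul {φ ψ : Eucl n → ℝ} {x : Eucl n} (hφ : ContDiffAt ℝ 2 φ x)
    (hψ : ContDiffAt ℝ 2 ψ x) :
    (hess (fun y => φ y * ψ y) x).trace
      = φ x * (hess ψ x).trace + 2 * (coordGrad φ x ⬝ᵥ coordGrad ψ x)
        + ψ x * (hess φ x).trace := by
  have hφ₀ := hφ.differentiableAt two_ne_zero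
  have hψ₀ := hψ.differentiableAt two_ne_zero
  have hφ₁ := differentiableAt_pd hφ
  have hψ₁ := differentiableAt_pd hψ
  have hpd (i : Fin n) : pd (fun y => φ y * ψ y) i
      =ᶠ[𝓝 x] fun y => φ y * pd ψ i y + ψ y * pd φ i y := by
    filter_upwards [hφ.eventually (by simp), hψ.eventually (by simp)] with y hφy hψy
    exact pd_mul (hφy.differentiableAt two_ne_zero) (hψy.differentiableAt two_ne_zero) i
  have hpd2 (i : Fin n) : pd2 (fun y => φ y * ψ y) i i x
      = φ x * pd2 ψ i i x + 2 * (pd φ i x * pd ψ i x) + ψ x * pd2 φ i i x := by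
    rw [pd2, pd_congr (hpd i), pd_add (hφ₀.fun_mul (hψ₁ i)) (hψ₀.fun_mul (hφ₁ i)),
      pd_mul hφ₀ (hψ₁ i), pd_mul hψ₀ (hφ₁ i), pd2, pd2]
    ring
  simp only [trace, diag_apply, hess, of_apply, hpd2, Finset.sum_add_distrib, ← Finset.mul_sum,
    dotProduct, coordGrad]

lemma trace_hess_sum {ι : Type*} {s : Finset ι} {φ : ι → Eucl n → ℝ} {x : Eucl n}
    (hφ : ∀ k ∈ s, ContDiffAt ℝ 2 (φ k) x) :
    (hess (fun y => ∑ k ∈ s, φ k y) x).trace = ∑ k ∈ s, (hess (φ k) x).trace := by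
  have hpd (i : Fin n) : pd (fun y => ∑ k ∈ s, φ k y) i
      =ᶠ[𝓝 x] fun y => ∑ k ∈ s, pd (φ k) i y := by
    filter_upwards [(Finset.eventually_all s).2 fun k hk => (hφ k hk).eventually (by simp)]
      with y hy
    exact pd_sum (fun k hk => (hy k hk).differentiableAt two_ne_zero) i
  simp only [trace, diag_apply, hess, of_apply, pd2]
  rw [Finset.sum_comm]
  refine Finset.sum_congr rfl fun i _ => ?_
  rw [pd_congr (hpd i), pd_sum fun k hk => differentiableAt_pd (hφ k hk) i]

lemma trace_hess_pd {φ : Eucl n → ℝ} {x : Eucl n} (h : ContDiffAt ℝ 3 φ x) (k : Fin n) :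
    (hess (pd φ k) x).trace = pd (fun y => (hess φ y).trace) k x := by
  have hpd (i : Fin n) : ContDiffAt ℝ 2 (pd φ i) x := contDiffAt_pd h le_rfl i
  calc ∑ i, pd (pd2 φ i k) i x
      = ∑ i, pd (pd2 φ k i) i x := Finset.sum_congr rfl fun i _ =>
        pd_congr ((h.eventually (by simp)).mono fun y hy =>
          pd2_comm (hy.of_le (by norm_num)) i k) i
    _ = ∑ i, pd (pd2 φ i i) k x := Finset.sum_congr rfl fun i _ => pd2_comm (hpd i) i k
    _ = pd (fun y => (hess φ y).trace) k x :=
        (pd_sum (fun i _ => differentiableAt_pd (hpd i) i) k).symm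

lemma bochner_formula {φ : Eucl n → ℝ} {x : Eucl n} (h : ContDiffAt ℝ 3 φ x) :
    (hess (fun y => coordGrad φ y ⬝ᵥ coordGrad φ y) x).trace
      = 2 * (coordGrad φ x ⬝ᵥ coordGrad (fun y => (hess φ y).trace) x
        + (hess φ x * (hess φ x)ᵀ).trace) := by
  have hpd (k : Fin n) : ContDiffAt ℝ 2 (pd φ k) x := contDiffAt_pd h le_rfl k
  have hHess : ∑ k, coordGrad (pd φ k) x ⬝ᵥ coordGrad (pd φ k) x
      = (hess φ x * (hess φ x)ᵀ).trace := Finset.sum_comm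
  calc (hess (fun y => ∑ k, pd φ k y * pd φ k y) x).trace
      = ∑ k, 2 * (pd φ k x * pd (fun y => (hess φ y).trace) k x
          + coordGrad (pd φ k) x ⬝ᵥ coordGrad (pd φ k) x) := by
        rw [trace_hess_sum fun k _ => (hpd k).mul (hpd k)]
        refine Finset.sum_congr rfl fun k _ => ?_
        rw [trace_hess_mul (hpd k) (hpd k), trace_hess_pd h]
        ring
    _ = _ := by
        rw [← Finset.mul_sum, Finset.sum_add_distrib, hHess]
        rfl

lemma divg_smul_gradient {a φ : Eucl n → ℝ} {x : Eucl n} (ha : DifferentiableAt ℝ a x)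
    (hφ : ContDiffAt ℝ 2 φ x) :
    divg (fun y => a y • gradient φ y) x
      = a x * (hess φ x).trace + coordGrad φ x ⬝ᵥ coordGrad a x := by
  have hcoord (i : Fin n) : (fun y => (a y • gradient φ y) i) = fun y => a y * pd φ i y :=
    funext fun y => by
      rw [PiLp.smul_apply, smul_eq_mul, gradient_eq_coordGrad, coordGrad]
  calc divg (fun y => a y • gradient φ y) x
      = ∑ i, (a x * pd2 φ i i x + pd φ i x * pd a i x) :=
        Finset.sum_congr rfl fun i _ => by
          rw [hcoord]
          exact pd_mul ha (differentiableAt_pd hφ i) i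
    _ = a x * (hess φ x).trace + coordGrad φ x ⬝ᵥ coordGrad a x := by
        rw [Finset.sum_add_distrib, ← Finset.mul_sum]
        rfl

end GradientHessian

section MixedPartials

variable {E G : Type*} [NormedAddCommGroup E] [NormedSpace ℝ E]
  [NormedAddCommGroup G] [NormedSpace ℝ G]

lemma fderiv_space_slice {w : E → ℝ → G} {x : E} {t : ℝ}
    (h : DifferentiableAt ℝ (Function.uncurry w) (x, t)) (ξ : E) :
    fderiv ℝ (fun y => w y t) x ξ = fderiv ℝ (Function.uncurry w) (x, t) (ξ, 0) := by
  have hslice := HasFDerivAt.comp (f := fun y => (y, t)) x h.hasFDerivAt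
    (hasFDerivAt_prodMk_left x t)
  exact congrArg (· ξ) hslice.fderiv

lemma hasDerivAt_time_slice {w : E → ℝ → G} {x : E} {t : ℝ}
    (h : DifferentiableAt ℝ (Function.uncurry w) (x, t)) :
    HasDerivAt (w x) (fderiv ℝ (Function.uncurry w) (x, t) (0, 1)) t :=
  (h.hasFDerivAt.comp t (hasFDerivAt_prodMk_right x t)).hasDerivAt

lemma contDiffAt_space_slice {w : E → ℝ → G} {x : E} {t : ℝ} {k : ℕ∞ω}
    (h : ContDiffAt ℝ k (Function.uncurry w) (x, t)) : ContDiffAt ℝ k (fun y => w y t) x :=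
  h.comp x (f := fun y => (y, t)) (contDiffAt_id.prodMk contDiffAt_const)

lemma eventually_deriv_time_eq_fderiv {w : E → ℝ → G} {x : E} {t : ℝ}
    (h : ContDiffAt ℝ 1 (Function.uncurry w) (x, t)) :
    (fun y => deriv (w y) t) =ᶠ[𝓝 x] fun y => fderiv ℝ (Function.uncurry w) (y, t) (0, 1) := by
  have hnear := (Continuous.prodMk_left t).continuousAt.eventually (h.eventually (by simp))
  filter_upwards [hnear] with y hy
  exact (hasDerivAt_time_slice (hy.differentiableAt one_ne_zero)).deriv

lemma contDiffAt_deriv_time {w : E → ℝ → G} {x : E} {t : ℝ} {k m : ℕ∞ω}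
    (h : ContDiffAt ℝ m (Function.uncurry w) (x, t)) (hkm : k + 1 ≤ m) :
    ContDiffAt ℝ k (fun y => deriv (w y) t) x :=
  (contDiffAt_space_slice (w := fun y r => fderiv ℝ (Function.uncurry w) (y, r) (0, 1))
    ((h.fderiv_right hkm).clm_apply contDiffAt_const)).congr_of_eventuallyEq
    (eventually_deriv_time_eq_fderiv (h.of_le (le_add_self.trans hkm)))

lemma hasDerivAt_fderiv_space {w : E → ℝ → G} {x : E} {t : ℝ}
    (h : ContDiffAt ℝ 2 (Function.uncurry w) (x, t)) (ξ : E) :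
    HasDerivAt (fun r => fderiv ℝ (fun y => w y r) x ξ)
      (fderiv ℝ (fun y => deriv (w y) t) x ξ) t := by
  have hspace : (fun r => fderiv ℝ (fun y => w y r) x ξ)
      =ᶠ[𝓝 t] fun r => fderiv ℝ (Function.uncurry w) (x, r) (ξ, 0) := by
    have hnear := (Continuous.prodMk_right x).continuousAt.eventually (h.eventually (by simp))
    filter_upwards [hnear] with r hr
    exact fderiv_space_slice (hr.differentiableAt two_ne_zero) ξ
  have hdiff (η : E × ℝ) : DifferentiableAt ℝ
      (Function.uncurry fun y r => fderiv ℝ (Function.uncurry w) (y, r) η) (x, t) :=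
    ((h.fderiv_right (m := 1) le_rfl).clm_apply contDiffAt_const).differentiableAt one_ne_zero
  have hmixed : fderiv ℝ (fun y => deriv (w y) t) x ξ
      = fderiv ℝ (fun P => fderiv ℝ (Function.uncurry w) P (ξ, 0)) (x, t) (0, 1) := by
    rw [(eventually_deriv_time_eq_fderiv (h.of_le one_le_two)).fderiv_eq,
      fderiv_space_slice (hdiff (0, 1))]
    exact fderiv_fderiv_apply_comm h _ _
  rw [hmixed]
  exact (hasDerivAt_time_slice (hdiff (ξ, 0))).congr_of_eventuallyEq hspace

end MixedPartials

section TangentialTraces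

open Matrix

lemma trace_one_sub_smul_vecMulVec_mul {ι R : Type*} [Fintype ι] [DecidableEq ι]
    [CommRing R] (c : R) (p : ι → R) (M : Matrix ι ι R) :
    ((1 - c • vecMulVec p p) * M).trace = M.trace - c * (p ⬝ᵥ M *ᵥ p) := by
  rw [sub_mul, one_mul, trace_sub, smul_mul_assoc, trace_smul, vecMulVec_mul, trace_vecMulVec,
    dotProduct_comm p (p ᵥ* M), ← dotProduct_mulVec, smul_eq_mul]

lemma trace_one_sub_smul_vecMulVec_sandwich {ι R : Type*} [Fintype ι] [DecidableEq ι]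
    [CommRing R] (c : R) (p : ι → R) {H : Matrix ι ι R} (hH : H.IsSymm) :
    ((1 - c • vecMulVec p p) * H * (1 - c • vecMulVec p p) * H).trace
      = (H * H).trace - 2 * c * (H *ᵥ p ⬝ᵥ H *ᵥ p) + c ^ 2 * (p ⬝ᵥ H *ᵥ p) ^ 2 := by
  have hvec : p ᵥ* H = H *ᵥ p := by rw [← vecMul_transpose, hH.eq]
  have hsandwich : H * (1 - c • vecMulVec p p) * H
      = H * H - c • vecMulVec (H *ᵥ p) (H *ᵥ p) := by
    rw [mul_sub, mul_one, sub_mul, mul_smul_comm, smul_mul_assoc, mul_vecMulVec, vecMulVec_mul,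
      hvec]
  have hHH : p ⬝ᵥ (H * H) *ᵥ p = H *ᵥ p ⬝ᵥ H *ᵥ p := by
    rw [← mulVec_mulVec, dotProduct_mulVec, hvec]
  rw [mul_assoc, mul_assoc, ← mul_assoc H, trace_one_sub_smul_vecMulVec_mul, hsandwich, trace_sub,
    trace_smul, trace_vecMulVec, sub_mulVec, smul_mulVec, vecMulVec_mulVec, dotProduct_sub, hHH,
    dotProduct_smul, dotProduct_smul, dotProduct_comm (H *ᵥ p) p]
  simp only [smul_eq_mul, MulOpposite.smul_eq_mul_unop, MulOpposite.unop_op]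
  ring

lemma sum_mul_mul_mul_eq_trace {ι R : Type*} [Fintype ι] [CommRing R] {G H : Matrix ι ι R}
    (hG : G.IsSymm) (hH : H.IsSymm) :
    ∑ i, ∑ j, ∑ k, ∑ l, G i k * G j l * H i j * H k l = (G * H * G * H).trace := by
  calc ∑ i, ∑ j, ∑ k, ∑ l, G i k * G j l * H i j * H k l
      = ∑ i, ∑ j, (G * H * G) i j * H j i := by
        refine Finset.sum_congr rfl fun i _ => Finset.sum_congr rfl fun j _ => ?_
        simp only [mul_apply, Finset.sum_mul]
        rw [Finset.sum_comm]
        refine Finset.sum_congr rfl fun l _ => Finset.sum_congr rfl fun k _ => ?_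
        rw [hG.apply l j, hH.apply i j]
        ring
    _ = (G * H * G * H).trace := rfl

end TangentialTraces

section AreaElement

open Matrix

lemma vel_pos (u : Eucl n → ℝ → ℝ) (x : Eucl n) (t : ℝ) : 0 < vel u x t := by
  rw [vel]; positivity

lemma vel_mul_self (u : Eucl n → ℝ → ℝ) (x : Eucl n) (t : ℝ) :
    vel u x t * vel u x t
      = 1 + coordGrad (fun y => u y t) x ⬝ᵥ coordGrad (fun y => u y t) x := by
  rw [vel, Real.mul_self_sqrt (by positivity), sgrad, norm_gradient_sq]

lemma vel_eq_sqrt (u : Eucl n → ℝ → ℝ) (x : Eucl n) (t : ℝ) :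
    vel u x t
      = √(1 + coordGrad (fun y => u y t) x ⬝ᵥ coordGrad (fun y => u y t) x) := by
  rw [vel, sgrad, norm_gradient_sq]

variable {u : Eucl n → ℝ → ℝ} {x : Eucl n} {t : ℝ}

local notation "du" => coordGrad (fun y => u y t) x
local notation "dv" => coordGrad (fun y => vel u y t) x
local notation "dh" => coordGrad (fun y => meanH u y t) x
local notation "dΔu" => coordGrad (fun y => Matrix.trace (hess (fun z => u z t) y)) x
local notation "D²u" => hess (fun y => u y t) x
local notation "D²v" => hess (fun y => vel u y t) x

lemma contDiffAt_vel {k m : ℕ∞ω} (hu : ContDiffAt ℝ m (fun y => u y t) x) (hkm : k + 1 ≤ m) :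
    ContDiffAt ℝ k (fun y => vel u y t) x := by
  simp only [vel_eq_sqrt]
  refine (contDiffAt_const.add (contDiffAt_coordGrad_dotProduct hu hu hkm)).sqrt ?_
  rw [← vel_mul_self]
  exact (mul_pos (vel_pos u x t) (vel_pos u x t)).ne'

lemma vel_smul_coordGrad_vel (hu : ContDiffAt ℝ 2 (fun y => u y t) x) :
    vel u x t • dv = D²u *ᵥ du := by
  have hvel := (contDiffAt_vel (k := 1) hu le_rfl).differentiableAt one_ne_zero
  have hsq := coordGrad_congr (x := x) (.of_forall fun y => vel_mul_self u y t)
  rw [coordGrad_mul hvel hvel, coordGrad_const_add, coordGrad_dotProduct hu hu,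
    ← two_smul ℝ, ← two_smul ℝ] at hsq
  exact smul_right_injective _ two_ne_zero hsq

lemma vel_mul_trace_hess_vel (hu : ContDiffAt ℝ 3 (fun y => u y t) x) :
    vel u x t * (D²v).trace = du ⬝ᵥ dΔu + (D²u * D²u).trace - dv ⬝ᵥ dv := by
  have hvel : ContDiffAt ℝ 2 (fun y => vel u y t) x := contDiffAt_vel hu le_rfl
  have hsq : (hess (fun y => vel u y t * vel u y t) x).trace
      = 2 * (du ⬝ᵥ dΔu + (D²u * D²u).trace) := by
    simp only [vel_mul_self, hess_const_add]
    rw [bochner_formula hu, (hess_isSymm (hu.of_le (by norm_num))).eq]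
  rw [trace_hess_mul hvel hvel] at hsq
  linarith

lemma vel_mul_meanH (hu : ContDiffAt ℝ 2 (fun y => u y t) x) :
    vel u x t * (vel u x t * meanH u x t + (D²u).trace) = du ⬝ᵥ dv := by
  have hne := (vel_pos u x t).ne'
  have hvel : DifferentiableAt ℝ (fun y => vel u y t) x :=
    (contDiffAt_vel (k := 1) hu le_rfl).differentiableAt one_ne_zero
  have hdiv : meanH u x t = -((vel u x t)⁻¹ * (D²u).trace
      + du ⬝ᵥ coordGrad (fun y => (vel u y t)⁻¹) x) :=
    congrArg Neg.neg (divg_smul_gradient (hvel.fun_inv hne) hu)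
  rw [hdiv, coordGrad_inv hvel hne, dotProduct_smul, smul_eq_mul]
  field_simp
  ring

lemma contDiffAt_meanH {k m : ℕ∞ω} (hu : ContDiffAt ℝ m (fun y => u y t) x)
    (hkm : k + 1 + 1 ≤ m) : ContDiffAt ℝ k (fun y => meanH u y t) x := by
  have hfield (i : Fin n) :
      ContDiffAt ℝ (k + 1) (fun y => ((vel u y t)⁻¹ • sgrad u y t) i) x := by
    simp only [PiLp.smul_apply, smul_eq_mul, sgrad, gradient_eq_coordGrad]
    exact ((contDiffAt_vel hu hkm).inv (vel_pos u x t).ne').mul (contDiffAt_pd hu hkm i)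
  exact (ContDiffAt.sum fun i _ => contDiffAt_pd (hfield i) le_rfl i).neg

lemma vel_mul_dotProduct_coordGrad_meanH (hu : ContDiffAt ℝ 3 (fun y => u y t) x) :
    vel u x t * (vel u x t * (du ⬝ᵥ dh) + meanH u x t * (du ⬝ᵥ dv) + du ⬝ᵥ dΔu)
        + (du ⬝ᵥ dv) ^ 2 / vel u x t
      = vel u x t * (dv ⬝ᵥ dv) + du ⬝ᵥ D²v *ᵥ du := by
  have hu₂ : ContDiffAt ℝ 2 (fun y => u y t) x := hu.of_le (by norm_num)
  have hvel : ContDiffAt ℝ 2 (fun y => vel u y t) x := contDiffAt_vel hu le_rfl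
  have hvel' := hvel.differentiableAt two_ne_zero
  have hh : DifferentiableAt ℝ (fun y => meanH u y t) x :=
    (contDiffAt_meanH (k := 1) hu (by norm_num)).differentiableAt one_ne_zero
  have hlap : DifferentiableAt ℝ (fun y => (hess (fun z => u z t) y).trace) x :=
    (contDiffAt_trace_hess (k := 1) hu (by norm_num)).differentiableAt one_ne_zero
  have hdiff := coordGrad_congr ((hu₂.eventually (by simp)).mono fun y hy => vel_mul_meanH hy)
  rw [coordGrad_mul hvel' ((hvel'.fun_mul hh).fun_add hlap),
    coordGrad_add (hvel'.fun_mul hh) hlap, coordGrad_mul hvel' hh,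
    coordGrad_dotProduct hu₂ hvel] at hdiff
  have hdir := congrArg (du ⬝ᵥ ·) hdiff
  have hHess : du ⬝ᵥ D²u *ᵥ dv = vel u x t * (dv ⬝ᵥ dv) := by
    rw [dotProduct_mulVec, ← mulVec_transpose, (hess_isSymm hu₂).eq, ← vel_smul_coordGrad_vel hu₂,
      smul_dotProduct, smul_eq_mul]
  simp only [dotProduct_add, dotProduct_smul, smul_eq_mul, hHess] at hdir
  rw [← hdir, ← vel_mul_meanH hu₂]
  field_simp [(vel_pos u x t).ne']

lemma of_gInv_eq : Matrix.of (gInv u x t) = 1 - (vel u x t ^ 2)⁻¹ • vecMulVec du du := by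
  ext i j
  simp only [of_apply, gInv, Matrix.sub_apply, Matrix.one_apply, Matrix.smul_apply,
    vecMulVec_apply, coordGrad, smul_eq_mul, div_eq_inv_mul]

lemma lapB_eq {φ : Eucl n → ℝ} (hφ : ContDiffAt ℝ 2 φ x) :
    lapB u φ x t
      = (hess φ x).trace - (vel u x t ^ 2)⁻¹ * (du ⬝ᵥ hess φ x *ᵥ du)
        + meanH u x t * (du ⬝ᵥ coordGrad φ x) / vel u x t := by
  have hsum : ∑ i, ∑ j, gInv u x t i j * pd2 φ i j x
      = (Matrix.of (gInv u x t) * hess φ x).trace :=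
    Finset.sum_congr rfl fun i _ => Finset.sum_congr rfl fun j _ =>
      congrArg (gInv u x t i j * ·) (pd2_comm hφ i j)
  rw [lapB, hsum, of_gInv_eq, trace_one_sub_smul_vecMulVec_mul, sgrad, inner_gradient_gradient]

lemma tgradSq_eq (φ : Eucl n → ℝ) :
    tgradSq u φ x t
      = coordGrad φ x ⬝ᵥ coordGrad φ x - (du ⬝ᵥ coordGrad φ x) ^ 2 / vel u x t ^ 2 := by
  rw [tgradSq, sgrad, inner_gradient_gradient, norm_gradient_sq]

lemma vel_sq_mul_secondFF2 (hu : ContDiffAt ℝ 2 (fun y => u y t) x) :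
    vel u x t ^ 2 * secondFF2 u x t
      = (D²u * D²u).trace - 2 * (dv ⬝ᵥ dv) + (du ⬝ᵥ dv) ^ 2 / vel u x t ^ 2 := by
  have hne := (vel_pos u x t).ne'
  have hG : (Matrix.of (gInv u x t)).IsSymm := by
    rw [of_gInv_eq, IsSymm, transpose_sub, transpose_one, transpose_smul, transpose_vecMulVec]
  have htrace : vel u x t ^ 2 * secondFF2 u x t
      = (Matrix.of (gInv u x t) * D²u * Matrix.of (gInv u x t) * D²u).trace := by
    rw [← sum_mul_mul_mul_eq_trace hG (hess_isSymm hu), secondFF2]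
    simp only [Finset.mul_sum]
    refine Finset.sum_congr rfl fun i _ => Finset.sum_congr rfl fun j _ =>
      Finset.sum_congr rfl fun k _ => Finset.sum_congr rfl fun l _ => ?_
    simp only [of_apply, hess]
    field_simp
  rw [htrace, of_gInv_eq, trace_one_sub_smul_vecMulVec_sandwich _ _ (hess_isSymm hu),
    ← vel_smul_coordGrad_vel hu]
  simp only [dotProduct_smul, smul_dotProduct, smul_eq_mul]
  field_simp

lemma lapB_vel (hu : ContDiffAt ℝ 3 (fun y => u y t) x) :
    lapB u (fun y => vel u y t) x t
      = secondFF2 u x t * vel u x t + 2 * tgradSq u (fun y => vel u y t) x t / vel u x t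
        - ⟪sgrad u x t, gradient (fun y => meanH u y t) x⟫ := by
  have hne := (vel_pos u x t).ne'
  have hbochner := vel_mul_trace_hess_vel hu
  have hmean := vel_mul_dotProduct_coordGrad_meanH hu
  have hsff := vel_sq_mul_secondFF2 (hu.of_le (by norm_num))
  rw [lapB_eq (contDiffAt_vel hu le_rfl), tgradSq_eq, sgrad, inner_gradient_gradient]
  field_simp at hmean hsff ⊢
  linear_combination hmean + vel u x t ^ 2 * hbochner - hsff

lemma deriv_vel (hu : ContDiffAt ℝ 2 (Function.uncurry u) (x, t)) :
    deriv (fun r => vel u x r) t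
      = ⟪(vel u x t)⁻¹ • sgrad u x t, gradient (fun y => deriv (u y) t) x⟫ := by
  have hne := (vel_pos u x t).ne'
  have hpd (i : Fin n) : HasDerivAt (fun r => pd (fun y => u y r) i x)
      (pd (fun y => deriv (u y) t) i x) t := hasDerivAt_fderiv_space hu _
  have hsq : HasDerivAt (fun r => 1 + ∑ i, pd (fun y => u y r) i x * pd (fun y => u y r) i x)
      (2 * (du ⬝ᵥ coordGrad (fun y => deriv (u y) t) x)) t := by
    refine ((HasDerivAt.fun_sum fun i _ => (hpd i).fun_mul (hpd i)).const_add 1).congr_deriv ?_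
    rw [dotProduct, Finset.mul_sum]
    exact Finset.sum_congr rfl fun i _ => by simp only [coordGrad]; ring
  have hne_sq : 1 + du ⬝ᵥ du ≠ 0 := vel_mul_self u x t ▸ mul_ne_zero hne hne
  calc deriv (fun r => vel u x r) t
      = deriv (fun r => √(1 + ∑ i, pd (fun y => u y r) i x * pd (fun y => u y r) i x)) t :=
        congrArg (deriv · t) (funext fun r => vel_eq_sqrt u x r)
    _ = 2 * (du ⬝ᵥ coordGrad (fun y => deriv (u y) t) x) / (2 * √(1 + du ⬝ᵥ du)) :=
        (hsq.sqrt hne_sq).deriv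
    _ = ⟪(vel u x t)⁻¹ • sgrad u x t, gradient (fun y => deriv (u y) t) x⟫ := by
        rw [← vel_eq_sqrt, inner_smul_left, sgrad, inner_gradient_gradient, conj_trivial]
        field_simp

lemma contDiffAt_normalSpeed {k m : ℕ∞ω} (hu : ContDiffAt ℝ m (Function.uncurry u) (x, t))
    (hkm : k + 1 ≤ m) : ContDiffAt ℝ k (fun y => deriv (u y) t / vel u y t) x :=
  (contDiffAt_deriv_time hu hkm).div (contDiffAt_vel (contDiffAt_space_slice hu) hkm)
    (vel_pos u x t).ne'

lemma deriv_vel_eq_inner_gradient_normalSpeed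
    (hu : ContDiffAt ℝ 2 (Function.uncurry u) (x, t)) :
    deriv (fun r => vel u x r) t
      = ⟪(vel u x t)⁻¹ • sgrad u x t, gradient (fun y => vel u y t) x⟫
          * (deriv (u x) t / vel u x t)
        + ⟪sgrad u x t, gradient (fun y => deriv (u y) t / vel u y t) x⟫ := by
  have hne := (vel_pos u x t).ne'
  have hvel : DifferentiableAt ℝ (fun y => vel u y t) x :=
    (contDiffAt_vel (k := 1) (contDiffAt_space_slice hu) le_rfl).differentiableAt one_ne_zero
  have hspeed : DifferentiableAt ℝ (fun y => deriv (u y) t / vel u y t) x :=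
    (contDiffAt_normalSpeed (k := 1) hu le_rfl).differentiableAt one_ne_zero
  have hsplit : coordGrad (fun y => deriv (u y) t) x
      = vel u x t • coordGrad (fun y => deriv (u y) t / vel u y t) x
        + (deriv (u x) t / vel u x t) • dv := by
    rw [← coordGrad_mul hvel hspeed]
    simp only [mul_div_cancel₀ _ (vel_pos u _ t).ne']
  rw [deriv_vel hu]
  simp only [inner_smul_left, conj_trivial, sgrad, inner_gradient_gradient, hsplit, dotProduct_add,
    dotProduct_smul, smul_eq_mul]
  field_simp
  ring

lemma inner_sgrad_gradient_forcing {F : Eucl n → ℝ}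
    (hu : ContDiffAt ℝ 3 (Function.uncurry u) (x, t))
    (hpde : ∀ᶠ y in 𝓝 x, deriv (u y) t / vel u y t = -meanH u y t + F y) :
    ⟪sgrad u x t, gradient F x⟫
      = ⟪sgrad u x t, gradient (fun y => deriv (u y) t / vel u y t) x⟫
        + ⟪sgrad u x t, gradient (fun y => meanH u y t) x⟫ := by
  have hspeed : ContDiffAt ℝ 1 (fun y => deriv (u y) t / vel u y t) x :=
    contDiffAt_normalSpeed hu (by norm_num)
  have hmean : ContDiffAt ℝ 1 (fun y => meanH u y t) x :=
    contDiffAt_meanH (contDiffAt_space_slice hu) (by norm_num)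
  have hF : F =ᶠ[𝓝 x] fun y => deriv (u y) t / vel u y t + meanH u y t :=
    hpde.mono fun y hy => by linarith
  rw [sgrad, inner_gradient_gradient, inner_gradient_gradient, inner_gradient_gradient,
    coordGrad_congr hF,
    coordGrad_add (hspeed.differentiableAt one_ne_zero) (hmean.differentiableAt one_ne_zero),
    dotProduct_add]

end AreaElement

theorem evolution_of_volume_element_general {u : Eucl n → ℝ → ℝ} {F : Eucl n → ℝ}
    {x : Eucl n} {t : ℝ} (hu : ContDiffAt ℝ 3 (Function.uncurry u) (x, t))
    (hpde : ∀ᶠ y in 𝓝 x, deriv (u y) t / vel u y t = -meanH u y t + F y) :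
    deriv (fun r => vel u x r) t
        - lapB u (fun y => vel u y t) x t
        - ⟪(vel u x t)⁻¹ • sgrad u x t, gradient (fun y => vel u y t) x⟫
            * (deriv (u x) t / vel u x t)
      = -(secondFF2 u x t) * vel u x t
          - 2 * tgradSq u (fun y => vel u y t) x t / vel u x t
          + ⟪sgrad u x t, gradient F x⟫ := by
  rw [inner_sgrad_gradient_forcing hu hpde, lapB_vel (contDiffAt_space_slice hu),
    deriv_vel_eq_inner_gradient_normalSpeed (hu.of_le (by norm_num))]
  ring

/-- Lemma 3.2: evolution equation of the volume element `v`. -/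
theorem evolution_of_volume_element
    (n : ℕ) (T : ℝ) (hT : 0 < T)
    (Ω : Set (Eucl n)) (hΩopen : IsOpen Ω)
    (f : Eucl n → ℝ → ℝ → Eucl (n + 1))
    (hf : ContDiff ℝ 1 (fun P : Eucl n × ℝ × ℝ => f P.1 P.2.1 P.2.2))
    (u₀ : Eucl n → ℝ) (u : Eucl n → ℝ → ℝ)
    (hsol : IsMCFSolution Ω f u₀ u T)
    (hreg : ContDiffOn ℝ ∞ (fun P : Eucl n × ℝ => u P.1 P.2) (Ω ×ˢ Ioo 0 T)) :
    ∀ x ∈ Ω, ∀ t ∈ Ioo (0 : ℝ) T,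
      deriv (fun r => vel u x r) t
          - lapB u (fun y => vel u y t) x t
          - ⟪(vel u x t)⁻¹ • sgrad u x t, gradient (fun y => vel u y t) x⟫
              * (deriv (u x) t / vel u x t)
        = -(secondFF2 u x t) * vel u x t
            - 2 * tgradSq u (fun y => vel u y t) x t / vel u x t
            + ⟪sgrad u x t, gradient (fun y => fdotn f u y t) x⟫ := by
  intro x hx t ht
  refine evolution_of_volume_element_general
    ((hreg.contDiffAt ((hΩopen.prod isOpen_Ioo).mem_nhds ⟨hx, ht⟩)).of_le (by norm_cast)) ?_
  filter_upwards [hΩopen.mem_nhds hx] with y hy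
  rw [hsol.pde y hy t ht, meanH, neg_neg]

end
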